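/- Fix α, σ > 0 and η ∈ (0,1], and let h(γ) = E[tanh(√γ Z + γ)] with Z standard Gaussian. Then the function F(q) = α(η + (1−η)h(q/σ²)) / (σ² + α(η + (1−η)h(q/σ²))) is concave on [0,1], satisfies F(0) = αη/(σ²+αη) > 0, is bounded by 1, and hence admits a unique fixed point q* ∈ [0,1). -/

import Mathlib

open MeasureTheory ProbabilityTheory Real

lemma aux_deriv_g {y : ℝ} (hy : 0 < y) :
    HasDerivAt (fun y : ℝ => Real.sinh y / (y * Real.cosh y ^ 2))
      ((Real.cosh y * (y * Real.cosh y ^ 2) - Real.sinh y *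
        (1 * Real.cosh y ^ 2 + y * (2 * Real.cosh y * Real.sinh y))) / (y * Real.cosh y ^ 2) ^ 2) y := by
  have hc := Real.cosh_pos y
  have h1 : HasDerivAt (fun y : ℝ => Real.cosh y ^ 2) (2 * Real.cosh y * Real.sinh y) y := by
    exact ((Real.hasDerivAt_cosh y).pow 2).congr_deriv (by simp)
  exact (Real.hasDerivAt_sinh y).div ((hasDerivAt_id' y).mul h1) (by positivity)

lemma aux_anti : AntitoneOn (fun y : ℝ => Real.sinh y / (y * Real.cosh y ^ 2)) (Set.Ioi 0) := by
  apply antitoneOn_of_deriv_nonpos (convex_Ioi 0)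
  · intro y hy
    exact (aux_deriv_g hy).continuousAt.continuousWithinAt
  · intro y hy
    rw [interior_Ioi] at hy
    exact (aux_deriv_g hy).differentiableAt.differentiableWithinAt
  · intro y hy
    rw [interior_Ioi] at hy
    have hy' : 0 < y := hy
    rw [(aux_deriv_g hy).deriv]
    apply div_nonpos_of_nonpos_of_nonneg _ (by positivity)
    have h1 : y ≤ Real.sinh y := Real.self_le_sinh_iff.2 hy'.le
    have h2 := Real.one_le_cosh y
    have h3 := Real.cosh_sq y
    have h4 : y ≤ Real.sinh y * Real.cosh y := by nlinarith
    have : Real.cosh y * (y * Real.cosh y ^ 2) - Real.sinh y *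
        (1 * Real.cosh y ^ 2 + y * (2 * Real.cosh y * Real.sinh y))
        = Real.cosh y * (y - y * Real.sinh y ^ 2 - Real.sinh y * Real.cosh y) := by
      linear_combination (Real.cosh y * y) * h3
    rw [this]
    apply mul_nonpos_of_nonneg_of_nonpos (by linarith)
    nlinarith [mul_nonneg hy'.le (sq_nonneg (Real.sinh y))]

lemma aux_deriv_phi {x : ℝ} (hx : 0 < x) :
    HasDerivAt (fun x : ℝ => (Real.cosh (√x))⁻¹)
      (-(1/2) * (Real.sinh (√x) / (√x * Real.cosh (√x) ^ 2))) x := by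
  have h1 := ((Real.hasDerivAt_sqrt hx.ne').cosh).inv (Real.cosh_pos _).ne'
  refine HasDerivAt.congr_deriv h1 ?_
  have := Real.sqrt_pos.2 hx
  have := Real.cosh_pos (√x)
  field_simp

lemma aux_convex : ConvexOn ℝ (Set.Ici 0) (fun x : ℝ => (Real.cosh (√x))⁻¹) := by
  apply MonotoneOn.convexOn_of_deriv (convex_Ici 0)
  · apply Continuous.continuousOn
    exact (Real.continuous_cosh.comp Real.continuous_sqrt).inv₀ (fun x => (Real.cosh_pos _).ne')
  · intro x hx
    rw [interior_Ici] at hx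
    exact (aux_deriv_phi hx).differentiableAt.differentiableWithinAt
  · rw [interior_Ici]
    intro x hx y hy hxy
    rw [(aux_deriv_phi hx).deriv, (aux_deriv_phi hy).deriv]
    have := aux_anti (a := √x) (b := √y) (Real.sqrt_pos.2 hx) (Real.sqrt_pos.2 hy)
      (Real.sqrt_le_sqrt hxy)
    simp only at this
    linarith

lemma aux_antitone : AntitoneOn (fun x : ℝ => (Real.cosh (√x))⁻¹) (Set.Ici 0) := by
  intro x _ y _ hxy
  apply inv_anti₀ (Real.cosh_pos _)
  rw [Real.cosh_le_cosh, abs_of_nonneg (Real.sqrt_nonneg _), abs_of_nonneg (Real.sqrt_nonneg _)]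
  exact Real.sqrt_le_sqrt hxy

lemma aux_eq {γ : ℝ} (hγ : 0 ≤ γ) (z : ℝ) :
    (Real.cosh (√γ * z))⁻¹ = (Real.cosh (√(γ * z ^ 2)))⁻¹ := by
  rw [Real.sqrt_mul hγ, Real.sqrt_sq_eq_abs, ← Real.cosh_abs (√γ * z), abs_mul,
    abs_of_nonneg (Real.sqrt_nonneg γ)]

lemma aux_sech_le (x : ℝ) : (Real.cosh x)⁻¹ ≤ 1 := inv_le_one_of_one_le₀ (Real.one_le_cosh x)

lemma aux_sech_int (s : ℝ) :
    Integrable (fun z => (Real.cosh (s * z))⁻¹) (gaussianReal 0 1) := by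
  have hc : Continuous (fun z => (Real.cosh (s * z))⁻¹) :=
    (Real.continuous_cosh.comp (by fun_prop)).inv₀ (fun x => (Real.cosh_pos _).ne')
  refine Integrable.of_bound hc.aestronglyMeasurable 1 (ae_of_all _ fun z => ?_)
  rw [Real.norm_of_nonneg (inv_nonneg.2 (Real.cosh_pos _).le)]
  exact aux_sech_le _

/-- the Gaussian average of sech -/
noncomputable def auxM (γ : ℝ) : ℝ := ∫ z, (Real.cosh (√γ * z))⁻¹ ∂(gaussianReal 0 1)

lemma auxM_nonneg (γ : ℝ) : 0 ≤ auxM γ :=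
  integral_nonneg fun _ => inv_nonneg.2 (Real.cosh_pos _).le

lemma auxM_le (γ : ℝ) : auxM γ ≤ 1 := by
  have := integral_mono (aux_sech_int (√γ)) (integrable_const (μ := gaussianReal 0 1) (1:ℝ))
    (fun z => aux_sech_le _)
  simpa [auxM] using this

lemma auxM_anti : AntitoneOn auxM (Set.Ici 0) := by
  intro x hx y hy hxy
  apply integral_mono (aux_sech_int _) (aux_sech_int _)
  intro z
  simp only
  rw [aux_eq hx, aux_eq hy]
  exact aux_antitone (mul_nonneg hx (sq_nonneg z)) (mul_nonneg hy (sq_nonneg z))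
    (mul_le_mul_of_nonneg_right hxy (sq_nonneg z))

lemma auxM_convex : ConvexOn ℝ (Set.Ici 0) auxM := by
  refine ⟨convex_Ici 0, ?_⟩
  intro x hx y hy a b ha hb hab
  have hx' : (0:ℝ) ≤ x := hx
  have hy' : (0:ℝ) ≤ y := hy
  simp only [smul_eq_mul, auxM]
  rw [← integral_const_mul, ← integral_const_mul,
    ← integral_add ((aux_sech_int _).const_mul _) ((aux_sech_int _).const_mul _)]
  apply integral_mono (aux_sech_int _)
    (((aux_sech_int _).const_mul _).add ((aux_sech_int _).const_mul _))
  intro z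
  simp only [Pi.add_apply]
  rw [aux_eq hx, aux_eq hy, aux_eq (by positivity)]
  have := aux_convex.2 (x := x * z ^ 2) (y := y * z ^ 2) (mul_nonneg hx (sq_nonneg z))
    (mul_nonneg hy (sq_nonneg z)) ha hb hab
  simp only [smul_eq_mul] at this
  convert this using 4
  ring

lemma auxE_convex : ConvexOn ℝ (Set.Ici 0) (fun γ : ℝ => Real.exp (-γ / 2) * auxM γ) := by
  have hE : ConvexOn ℝ (Set.Ici (0:ℝ)) (fun γ : ℝ => Real.exp (-γ / 2)) := by
    have := (convexOn_exp.comp_linearMap ((-1/2 : ℝ) • LinearMap.id)).subset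
      (Set.subset_univ (Set.Ici (0:ℝ))) (convex_Ici 0)
    have e : (fun γ : ℝ => Real.exp (-γ / 2)) = Real.exp ∘ ((-1/2 : ℝ) • (LinearMap.id : ℝ →ₗ[ℝ] ℝ)) := by
      ext γ
      simp only [Function.comp_apply, LinearMap.smul_apply, LinearMap.id_apply, smul_eq_mul]
      congr 1
      ring
    rw [e]
    exact this
  have hEa : AntitoneOn (fun γ : ℝ => Real.exp (-γ / 2)) (Set.Ici (0:ℝ)) := by
    intro x _ y _ hxy
    exact Real.exp_le_exp.2 (by linarith)
  exact hE.mul auxM_convex (fun _ _ => (Real.exp_pos _).le) (fun _ _ => auxM_nonneg _)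
    (hEa.monovaryOn auxM_anti)

lemma aux_tanh_abs (x : ℝ) : |Real.tanh x| ≤ 1 := (Real.abs_tanh_lt_one x).le

lemma aux_tanh_cont : Continuous Real.tanh := by
  have : Real.tanh = fun x => Real.sinh x / Real.cosh x := funext Real.tanh_eq_sinh_div_cosh
  rw [this]
  exact Real.continuous_sinh.div Real.continuous_cosh fun x => (Real.cosh_pos _).ne'

lemma aux_shift (s : ℝ) (f : ℝ → ℝ) :
    ∫ z, f (z + s) ∂(gaussianReal 0 1)
      = ∫ z, Real.exp (s * z - s ^ 2 / 2) * f z ∂(gaussianReal 0 1) := by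
  rw [integral_gaussianReal_eq_integral_smul one_ne_zero,
    integral_gaussianReal_eq_integral_smul one_ne_zero]
  rw [← integral_sub_right_eq_self _ s]
  congr 1
  ext z
  simp only [smul_eq_mul, gaussianPDFReal, sub_add_cancel]
  rw [← mul_assoc, mul_assoc _ (Real.exp _) (Real.exp _), ← Real.exp_add]
  congr 3
  push_cast
  ring

lemma aux_exp_int (s : ℝ) : Integrable (fun z => Real.exp (s * z)) (gaussianReal 0 1) :=
  integrable_exp_mul_gaussianReal s

lemma aux_exp_val (s : ℝ) : ∫ z, Real.exp (s * z) ∂(gaussianReal 0 1) = Real.exp (s ^ 2 / 2) := by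
  have := congrFun (mgf_id_gaussianReal (μ := 0) (v := 1)) s
  simpa [mgf] using this

lemma aux_h {γ : ℝ} (hγ : 0 ≤ γ) :
    ∫ z, Real.tanh (√γ * z + γ) ∂(gaussianReal 0 1) = 1 - Real.exp (-γ / 2) * auxM γ := by
  set s := √γ with hs
  have hs2 : s ^ 2 = γ := Real.sq_sqrt hγ
  have e1 : ∫ z, Real.tanh (s * z + γ) ∂(gaussianReal 0 1)
      = ∫ z, Real.exp (s * z - s ^ 2 / 2) * Real.tanh (s * z) ∂(gaussianReal 0 1) := by
    rw [← aux_shift s (fun z => Real.tanh (s * z))]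
    congr 1
    ext z
    rw [← hs2]
    congr 1
    ring
  have e2 : ∫ z, Real.exp (s * z - s ^ 2 / 2) * Real.tanh (s * z) ∂(gaussianReal 0 1)
      = Real.exp (-γ / 2) * ∫ z, Real.exp (s * z) * Real.tanh (s * z) ∂(gaussianReal 0 1) := by
    rw [← integral_const_mul]
    congr 1
    ext z
    rw [hs2, ← mul_assoc, ← Real.exp_add]
    congr 2
    ring
  have hneg : ∀ f : ℝ → ℝ, ∫ z, f (-z) ∂(gaussianReal 0 1) = ∫ z, f z ∂(gaussianReal 0 1) := by
    intro f
    have hm : (gaussianReal 0 1).map (fun z : ℝ => -z) = gaussianReal 0 1 := by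
      rw [gaussianReal_map_neg]; simp
    have := (MeasurableEquiv.neg ℝ).measurableEmbedding.integral_map (μ := gaussianReal 0 1) f
    have h2 : (gaussianReal 0 1).map (MeasurableEquiv.neg ℝ) = gaussianReal 0 1 := hm
    rw [h2] at this
    exact this.symm
  have hIntg : ∀ t : ℝ, Integrable (fun z => Real.exp (t * z) * Real.tanh (s * z)) (gaussianReal 0 1) := by
    intro t
    refine (aux_exp_int t).mul_bdd (c := 1) ?_ (ae_of_all _ fun z => ?_)
    · exact (aux_tanh_cont.comp (by fun_prop)).aestronglyMeasurable
    · exact aux_tanh_abs _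
  have e3 : ∫ z, Real.exp (s * z) * Real.tanh (s * z) ∂(gaussianReal 0 1)
      = - ∫ z, Real.exp (-s * z) * Real.tanh (s * z) ∂(gaussianReal 0 1) := by
    rw [← hneg, ← integral_neg]
    congr 1
    ext z
    rw [mul_neg, Real.tanh_neg, neg_mul s z]
    ring
  have e4 : 2 * ∫ z, Real.exp (s * z) * Real.tanh (s * z) ∂(gaussianReal 0 1)
      = ∫ z, (Real.exp (s * z) + Real.exp (-s * z) - 2 * (Real.cosh (s * z))⁻¹) ∂(gaussianReal 0 1) := by
    rw [two_mul]
    nth_rewrite 2 [e3]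
    rw [← sub_eq_add_neg, ← integral_sub (hIntg _) (hIntg _)]
    congr 1
    ext z
    have hc := Real.cosh_pos (s * z)
    have h3 := Real.cosh_sq (s * z)
    rw [neg_mul, ← sub_mul, Real.tanh_eq_sinh_div_cosh]
    have a1 : Real.exp (s * z) - Real.exp (-(s * z)) = 2 * Real.sinh (s * z) := by
      rw [Real.sinh_eq]; ring
    have a2 : Real.exp (s * z) + Real.exp (-(s * z)) = 2 * Real.cosh (s * z) := by
      rw [Real.cosh_eq]; ring
    rw [a1, a2]
    field_simp
    linarith
  have hadd : Integrable (fun z => Real.exp (s * z) + Real.exp (-s * z)) (gaussianReal 0 1) :=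
    (aux_exp_int _).add (aux_exp_int _)
  rw [integral_sub hadd ((aux_sech_int _).const_mul _),
    integral_add (aux_exp_int _) (aux_exp_int _), integral_const_mul, aux_exp_val, aux_exp_val,
    neg_sq, hs2] at e4
  have e5 : ∫ z, Real.exp (s * z) * Real.tanh (s * z) ∂(gaussianReal 0 1)
      = Real.exp (γ / 2) - auxM γ := by
    unfold auxM
    rw [← hs]
    linarith
  rw [e1, e2, e5, mul_sub, ← Real.exp_add]
  congr 1
  rw [← Real.exp_zero]
  congr 1
  ring

theorem stmt10 (α σ η : ℝ) (hα : 0 < α) (hσ : 0 < σ) (hη : η ∈ Set.Ioc (0 : ℝ) 1)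
    (h : ℝ → ℝ)
    (hdef : h = fun γ : ℝ => ∫ z, Real.tanh (Real.sqrt γ * z + γ) ∂(gaussianReal 0 1))
    (F : ℝ → ℝ)
    (hF : F = fun q : ℝ => α * (η + (1 - η) * h (q / σ ^ 2))
        / (σ ^ 2 + α * (η + (1 - η) * h (q / σ ^ 2)))) :
    ConcaveOn ℝ (Set.Icc 0 1) F
    ∧ F 0 = α * η / (σ ^ 2 + α * η)
    ∧ 0 < F 0
    ∧ (∀ q ∈ Set.Icc (0 : ℝ) 1, F q ≤ 1)
    ∧ ∃! q, q ∈ Set.Ico (0 : ℝ) 1 ∧ F q = q := by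
  obtain ⟨hη0, hη1⟩ := hη
  have hσ2 : 0 < σ ^ 2 := by positivity
  have h0 : h 0 = 0 := by simp [hdef]
  have hval : ∀ γ, 0 ≤ γ → h γ = 1 - Real.exp (-γ / 2) * auxM γ := by
    intro γ hγ
    rw [hdef]
    exact aux_h hγ
  have hnn : ∀ γ, 0 ≤ γ → 0 ≤ h γ := by
    intro γ hγ
    rw [hval γ hγ]
    have a1 : Real.exp (-γ / 2) ≤ 1 := Real.exp_le_one_iff.2 (by linarith)
    nlinarith [auxM_nonneg γ, auxM_le γ, Real.exp_pos (-γ / 2)]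
  have hconc : ∀ x y a b : ℝ, 0 ≤ x → 0 ≤ y → 0 ≤ a → 0 ≤ b → a + b = 1 →
      a * h x + b * h y ≤ h (a * x + b * y) := by
    intro x y a b hx hy ha hb hab
    rw [hval x hx, hval y hy, hval _ (by positivity)]
    have := auxE_convex.2 (x := x) (y := y) hx hy ha hb hab
    simp only [smul_eq_mul] at this
    nlinarith
  have hcont : Continuous h := by
    rw [hdef]
    refine continuous_of_dominated (bound := fun _ => 1) ?_ ?_ (integrable_const _) ?_
    · intro γ
      exact (aux_tanh_cont.comp (by fun_prop)).aestronglyMeasurable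
    · intro γ
      exact ae_of_all _ fun z => aux_tanh_abs _
    · exact ae_of_all _ fun z => aux_tanh_cont.comp (by fun_prop)
  set u : ℝ → ℝ := fun q => α * (η + (1 - η) * h (q / σ ^ 2)) with hu
  have hFu : ∀ q, F q = u q / (σ ^ 2 + u q) := fun q => by rw [hF]
  have hupos : ∀ q, 0 ≤ q → 0 < u q := by
    intro q hq
    have := hnn (q / σ ^ 2) (by positivity)
    have h2 : 0 ≤ (1 - η) * h (q / σ ^ 2) := mul_nonneg (by linarith) this
    simp only [hu]
    positivity
  have huconc : ∀ x y a b : ℝ, 0 ≤ x → 0 ≤ y → 0 ≤ a → 0 ≤ b → a + b = 1 →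
      a * u x + b * u y ≤ u (a * x + b * y) := by
    intro x y a b hx hy ha hb hab
    have := hconc (x / σ ^ 2) (y / σ ^ 2) a b (by positivity) (by positivity) ha hb hab
    have e : (a * x + b * y) / σ ^ 2 = a * (x / σ ^ 2) + b * (y / σ ^ 2) := by ring
    simp only [hu, e]
    have h2 := mul_le_mul_of_nonneg_left this (mul_nonneg hα.le (sub_nonneg.2 hη1))
    have h3 : a * (α * η) + b * (α * η) = α * η := by rw [← add_mul, hab, one_mul]
    linarith
  have hFeq : ∀ q, 0 ≤ q → F q = 1 - σ ^ 2 * (σ ^ 2 + u q)⁻¹ := by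
    intro q hq
    have := hupos q hq
    rw [hFu]
    field_simp
    ring
  have hFlt : ∀ q, 0 ≤ q → F q < 1 := by
    intro q hq
    have := hupos q hq
    rw [hFeq q hq]
    have : 0 < σ ^ 2 * (σ ^ 2 + u q)⁻¹ := by positivity
    linarith
  have hFpos : ∀ q, 0 ≤ q → 0 < F q := by
    intro q hq
    have := hupos q hq
    rw [hFu]
    positivity
  have hFconc : ConcaveOn ℝ (Set.Icc 0 1) F := by
    refine ⟨convex_Icc 0 1, ?_⟩
    intro x hx y hy a b ha hb hab
    have hx0 := hx.1
    have hy0 := hy.1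
    have hxy : 0 ≤ a * x + b * y := by positivity
    simp only [smul_eq_mul]
    rw [hFeq x hx0, hFeq y hy0, hFeq _ hxy]
    have ux := hupos x hx0
    have uy := hupos y hy0
    have hc := huconc x y a b hx0 hy0 ha hb hab
    have e : a * (σ ^ 2 + u x) + b * (σ ^ 2 + u y) ≤ σ ^ 2 + u (a * x + b * y) := by
      have : a * σ ^ 2 + b * σ ^ 2 = σ ^ 2 := by rw [← add_mul, hab, one_mul]
      linarith
    have hp : 0 < a * (σ ^ 2 + u x) + b * (σ ^ 2 + u y) := by
      have : a * σ ^ 2 + b * σ ^ 2 = σ ^ 2 := by rw [← add_mul, hab, one_mul]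
      nlinarith [mul_nonneg ha ux.le, mul_nonneg hb uy.le]
    have i1 := inv_anti₀ hp e
    have i2 := (convexOn_zpow (𝕜 := ℝ) (-1)).2 (x := σ ^ 2 + u x) (y := σ ^ 2 + u y)
      (show 0 < σ ^ 2 + u x by positivity) (show 0 < σ ^ 2 + u y by positivity) ha hb hab
    simp only [smul_eq_mul, zpow_neg_one] at i2
    have i3 := mul_le_mul_of_nonneg_left (i1.trans i2) hσ2.le
    linarith
  refine ⟨hFconc, ?_, hFpos 0 le_rfl, fun q hq => (hFlt q hq.1).le, ?_⟩
  · rw [hF]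
    simp [h0]
  · have hFc : ContinuousOn (fun q => F q - q) (Set.Icc 0 1) := by
      have huc : Continuous u := by
        simp only [hu]
        fun_prop
      have : ContinuousOn (fun q => u q / (σ ^ 2 + u q) - q) (Set.Icc 0 1) := by
        refine ContinuousOn.sub (huc.continuousOn.div (by fun_prop) ?_) continuousOn_id
        intro q hq
        have := hupos q hq.1
        positivity
      exact this.congr fun q _ => by simp only [hFu]
    have hex := intermediate_value_Icc' (zero_le_one' ℝ) hFc
    have hmem : (0:ℝ) ∈ Set.Icc (F 1 - 1) (F 0 - 0) :=
      ⟨by linarith [hFlt 1 zero_le_one], by linarith [hFpos 0 le_rfl]⟩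
    obtain ⟨q, hq, hq0⟩ := hex hmem
    have hfix : F q = q := by simpa [sub_eq_zero] using hq0
    have key : ∀ a b : ℝ, 0 ≤ a → a < b → b ≤ 1 → F a = a → F b = b → False := by
      intro a b ha hab hb1 hFa hFb
      have hb : 0 < b := by linarith
      have hr : a / b < 1 := (div_lt_one hb).2 hab
      have hr1 : 0 ≤ 1 - a / b := by linarith
      have hr2 : 0 ≤ a / b := by positivity
      have hz : (0:ℝ) ∈ Set.Icc (0:ℝ) 1 := ⟨le_rfl, zero_le_one⟩
      have hbm : b ∈ Set.Icc (0:ℝ) 1 := ⟨hb.le, hb1⟩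
      have := hFconc.2 hz hbm hr1 hr2 (by ring)
      simp only [smul_eq_mul, mul_zero, zero_add] at this
      rw [hFb, div_mul_cancel₀ _ hb.ne', hFa] at this
      nlinarith [mul_pos (sub_pos.2 hr) (hFpos 0 le_rfl)]
    refine ⟨q, ⟨⟨hq.1, ?_⟩, hfix⟩, ?_⟩
    · rw [← hfix]; exact hFlt q hq.1
    · rintro p ⟨hp, hpF⟩
      rcases lt_trichotomy p q with hlt | heq | hgt
      · exact (key p q hp.1 hlt hq.2 hpF hfix).elim
      · exact heq
      · exact (key q p hq.1 hgt hp.2.le hfix hpF).elim
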